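/- For every k ≥ 1 there is a K-linear bijection Φ : P_k[X] → ∏_{σ ∈ C_k} K^ℤ that is equivariant for the actions of ℤ: Φ(z · c) = z · Φ(c) for all z ∈ ℤ and c ∈ P_k[X], where (z · c)(m) = c(m − z) on P_k[X] and ℤ acts on each factor K^ℤ by the shift (z · f)(n) = f(n − z). Moreover C_1 is a singleton, so P_1[X] is ℤ-equivariantly isomorphic to the shift representation K^ℤ, while for k ≥ 2 the index set C_k is countably infinite, so P_k[X] is ℤ-equivariantly isomorphic to a countably infinite product of copies of the shift representation K^ℤ. -/

import Mathlib

/-- Translate every element of a multiset of integers by `z`. -/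
def shiftM (m : Multiset ℤ) (z : ℤ) : Multiset ℤ := m.map (· + z)

/-- A non-negative composition of order `k`. -/
def IsComp (k : ℕ) (σ : List ℕ) : Prop :=
  σ ≠ [] ∧ (∀ a ∈ σ.head?, 0 < a) ∧ (∀ a ∈ σ.getLast?, 0 < a) ∧ σ.sum = k

/-- `P_k[X]`, realized via multisets of cardinality `k`. -/
abbrev Mk (k : ℕ) := {m : Multiset ℤ // Multiset.card m = k}

/-- The action of `z ∈ ℤ ≅ F₁` on `P_k[X]`: `(z · c)(m) = c(m − z)`. -/
def zAct (K : Type*) [Field K] (k : ℕ) (z : ℤ) (c : Mk k → K) : Mk k → K :=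
  fun m => c ⟨shiftM m.1 (-z), by rw [shiftM, Multiset.card_map]; exact m.2⟩

/-!
A nonempty multiset of integers is determined by its least element `n` together with the list of
multiplicities of `n, n + 1, …, max`.  That list is a non-negative composition, and translation by
`z` moves `n` to `n + z` while leaving the list unchanged.  Hence `M_k ≃ C_k × ℤ` equivariantly,
and passing to functions gives the isomorphism.
-/

theorem eq_of_getD_eq_of_getLast?_ne {α : Type*} {d : α} {l l' : List α}
    (hl : ∀ a ∈ l.getLast?, a ≠ d) (hl' : ∀ a ∈ l'.getLast?, a ≠ d)
    (h : ∀ i, l.getD i d = l'.getD i d) : l = l' := by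
  wlog hle : l.length ≤ l'.length generalizing l l'
  · exact (this hl' hl (fun i => (h i).symm) (Nat.le_of_not_le hle)).symm
  have hlen : l.length = l'.length := by
    by_contra hne
    have hlt : l'.length - 1 < l'.length := by omega
    have hlast : l'.getD (l'.length - 1) d ≠ d := by
      rw [List.getD_eq_getElem _ _ hlt]
      exact hl' _ (by rw [List.getLast?_eq_getElem?]; exact List.getElem?_eq_getElem hlt)
    exact hlast ((h _).symm.trans (List.getD_eq_default _ _ (by omega)))
  refine List.ext_getElem hlen fun i hi hi' => ?_
  simpa only [List.getD_eq_getElem, hi, hi'] using h i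

theorem isComp_cons_append {a b : ℕ} (ha : 0 < a) (l : List ℕ) (hb : 0 < b) :
    IsComp (a + l.sum + b) (a :: (l ++ [b])) := by
  refine ⟨List.cons_ne_nil _ _, by simpa using ha, ?_, by simp [add_assoc]⟩
  rw [← List.cons_append, List.getLast?_concat]
  simpa using hb

theorem isComp_one_iff {σ : List ℕ} : IsComp 1 σ ↔ σ = [1] := by
  refine ⟨?_, by rintro rfl; simp [IsComp]⟩
  rintro ⟨hne, hhead, hlast, hsum⟩
  obtain ⟨a, l, rfl⟩ := List.exists_cons_of_ne_nil hne
  have ha : 0 < a := hhead a rfl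
  obtain rfl | ⟨l, b, rfl⟩ := List.eq_nil_or_concat' l
  · simpa using hsum
  · have hb : 0 < b := hlast b (by rw [← List.cons_append, List.getLast?_concat]; rfl)
    simp only [List.sum_cons, List.sum_append, List.sum_nil] at hsum
    omega

theorem infinite_isComp {k : ℕ} (hk : 2 ≤ k) : Infinite {σ : List ℕ // IsComp k σ} := by
  have hcomp (n : ℕ) : IsComp k (1 :: (List.replicate n 0 ++ [k - 1])) := by
    convert isComp_cons_append one_pos (List.replicate n 0) (b := k - 1) (by omega)
    rw [List.sum_replicate, smul_zero]
    omega
  refine Infinite.of_injective (fun n => ⟨_, hcomp n⟩) fun a b hab => ?_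
  simpa using congrArg (fun σ => σ.1.length) hab

/-- The multiset of integers in which `n + i` has multiplicity `l[i]`, that is, the monomial
`∏ i, x_{n + i} ^ l[i]`; for `l` a composition these exhaust the nonempty multisets. -/
def multisetOfMults (l : List ℕ) (n : ℤ) : Multiset ℤ :=
  ∑ i : Fin l.length, Multiset.replicate l[i] (n + (i : ℕ))

theorem card_multisetOfMults (l : List ℕ) (n : ℤ) :
    Multiset.card (multisetOfMults l n) = l.sum := by
  simp [multisetOfMults]

theorem shiftM_multisetOfMults (l : List ℕ) (n z : ℤ) :
    shiftM (multisetOfMults l n) z = multisetOfMults l (n + z) := by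
  rw [shiftM, ← Multiset.coe_mapAddMonoidHom, multisetOfMults, map_sum]
  simp only [Multiset.coe_mapAddMonoidHom, Multiset.map_replicate, multisetOfMults,
    add_right_comm]

theorem le_of_mem_multisetOfMults {l : List ℕ} {n x : ℤ} (hx : x ∈ multisetOfMults l n) :
    n ≤ x := by
  obtain ⟨i, -, hi⟩ := Multiset.mem_sum.1 hx
  rw [Multiset.eq_of_mem_replicate hi]
  omega

theorem count_add_multisetOfMults (l : List ℕ) (n : ℤ) (i : ℕ) :
    (multisetOfMults l n).count (n + i) = l.getD i 0 := by
  rw [multisetOfMults, Multiset.count_sum']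
  simp only [Multiset.count_replicate, add_right_inj, Nat.cast_inj]
  by_cases hi : i < l.length
  · rw [Finset.sum_eq_single ⟨i, hi⟩] <;> simp +contextual [hi, Fin.ext_iff]
  · rw [List.getD_eq_default _ _ (by omega)]
    refine Finset.sum_eq_zero fun j _ => if_neg ?_
    omega

theorem multisetOfMults_map_count {m : Multiset ℤ} {n : ℤ} {N : ℕ}
    (hm : ∀ x ∈ m, n ≤ x ∧ x ≤ n + N) :
    multisetOfMults ((List.range (N + 1)).map fun i : ℕ => m.count (n + i)) n = m := by
  ext x
  obtain hx | hx := lt_or_ge x n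
  · rw [Multiset.count_eq_zero_of_notMem fun h => (le_of_mem_multisetOfMults h).not_gt hx,
      Multiset.count_eq_zero_of_notMem fun h => (hm x h).1.not_gt hx]
  · obtain ⟨i, rfl⟩ := Int.le.dest hx
    rw [count_add_multisetOfMults]
    by_cases hi : i < N + 1
    · simp [hi]
    · rw [List.getD_eq_default _ _ (by simpa using hi),
        Multiset.count_eq_zero_of_notMem fun h => by have := (hm _ h).2; omega]

theorem IsComp.mem_multisetOfMults {k : ℕ} {σ : List ℕ} (hσ : IsComp k σ) (n : ℤ) :
    n ∈ multisetOfMults σ n := by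
  obtain ⟨hne, hhead, -, -⟩ := hσ
  obtain ⟨a, l, rfl⟩ := List.exists_cons_of_ne_nil hne
  have hcount : (multisetOfMults (a :: l) n).count n = a := by
    simpa using count_add_multisetOfMults (a :: l) n 0
  rw [← Multiset.count_pos, hcount]
  exact hhead a rfl

theorem IsComp.eq_and_eq_of_multisetOfMults_eq {k k' : ℕ} {σ τ : List ℕ} {n n' : ℤ}
    (hσ : IsComp k σ) (hτ : IsComp k' τ) (h : multisetOfMults σ n = multisetOfMults τ n') :
    σ = τ ∧ n = n' := by
  have hn : n = n' := le_antisymm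
    (le_of_mem_multisetOfMults (h ▸ hτ.mem_multisetOfMults n'))
    (le_of_mem_multisetOfMults (h ▸ hσ.mem_multisetOfMults n))
  subst hn
  refine ⟨eq_of_getD_eq_of_getLast?_ne (d := 0) (fun a ha => (hσ.2.2.1 a ha).ne')
    (fun a ha => (hτ.2.2.1 a ha).ne') fun i => ?_, rfl⟩
  rw [← count_add_multisetOfMults σ n, h, count_add_multisetOfMults]

theorem exists_isComp_multisetOfMults_eq {m : Multiset ℤ} (hm : m ≠ 0) :
    ∃ σ n, IsComp (Multiset.card m) σ ∧ multisetOfMults σ n = m := by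
  have hne : m.toFinset.Nonempty := Multiset.toFinset_nonempty.2 hm
  set n := m.toFinset.min' hne
  obtain ⟨N, hN⟩ := Int.le.dest (m.toFinset.min'_le_max' hne)
  have hmin : n ∈ m := Multiset.mem_toFinset.1 (m.toFinset.min'_mem hne)
  have hmax : n + N ∈ m := hN ▸ Multiset.mem_toFinset.1 (m.toFinset.max'_mem hne)
  have hbounds (x : ℤ) (hx : x ∈ m) : n ≤ x ∧ x ≤ n + N := by
    rw [← Multiset.mem_toFinset] at hx
    exact ⟨m.toFinset.min'_le x hx, hN ▸ m.toFinset.le_max' x hx⟩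
  have heq := multisetOfMults_map_count hbounds
  refine ⟨_, n, ⟨by simp, ?_, ?_, ?_⟩, heq⟩
  · simpa [List.head?_range, Multiset.count_pos] using hmin
  · simpa [List.getLast?_range, Multiset.count_pos] using hmax
  · rw [← card_multisetOfMults _ n, heq]

/-- Translation by `z` on `M_k`, so that `z · c` is `c` precomposed with translation by `-z`. -/
def Mk.shift {k : ℕ} (m : Mk k) (z : ℤ) : Mk k :=
  ⟨shiftM m.1 z, (Multiset.card_map _ _).trans m.2⟩

/-- The element of `M_k` with multiplicities given by the composition `p.1` and least element
`p.2`. -/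
def Mk.ofComp {k : ℕ} (p : {σ : List ℕ // IsComp k σ} × ℤ) : Mk k :=
  ⟨multisetOfMults p.1 p.2, (card_multisetOfMults _ _).trans p.1.2.2.2.2⟩

theorem Mk.shift_ofComp {k : ℕ} (σ : {σ : List ℕ // IsComp k σ}) (n z : ℤ) :
    (Mk.ofComp (σ, n)).shift z = Mk.ofComp (σ, n + z) :=
  Subtype.ext (shiftM_multisetOfMults σ n z)

theorem Mk.bijective_ofComp {k : ℕ} (hk : 0 < k) : Function.Bijective (Mk.ofComp (k := k)) := by
  constructor
  · rintro ⟨⟨σ, hσ⟩, n⟩ ⟨⟨τ, hτ⟩, n'⟩ h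
    obtain ⟨rfl, rfl⟩ := hσ.eq_and_eq_of_multisetOfMults_eq hτ (congrArg Subtype.val h)
    rfl
  · rintro ⟨m, rfl⟩
    obtain ⟨σ, n, hσ, h⟩ := exists_isComp_multisetOfMults_eq (Multiset.card_pos.1 hk)
    exact ⟨(⟨σ, hσ⟩, n), Subtype.ext h⟩

theorem stmt18_general (R V : Type*) [Semiring R] [AddCommMonoid V] [Module R V] (k : ℕ)
    (hk : 1 ≤ k) :
    (∃ Φ : (Mk k → V) ≃ₗ[R] ({σ : List ℕ // IsComp k σ} → ℤ → V),
      ∀ (z : ℤ) (c : Mk k → V),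
        Φ (fun m => c (m.shift (-z))) = fun σ n => Φ c σ (n - z)) ∧
    (k = 1 → ∃! σ : List ℕ, IsComp 1 σ) ∧
    (2 ≤ k → Countable {σ : List ℕ // IsComp k σ} ∧
      Infinite {σ : List ℕ // IsComp k σ}) := by
  refine ⟨?_, fun _ => ⟨[1], isComp_one_iff.2 rfl, fun _ => isComp_one_iff.1⟩,
    fun h => ⟨inferInstance, infinite_isComp h⟩⟩
  let e : {σ : List ℕ // IsComp k σ} × ℤ ≃ Mk k := Equiv.ofBijective _ (Mk.bijective_ofComp hk)
  refine ⟨(LinearEquiv.funCongrLeft R V e).trans (LinearEquiv.curry R V _ _), fun z c => ?_⟩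
  funext σ n
  exact congrArg c (Mk.shift_ofComp σ n (-z))

/-- For every `k ≥ 1` there is a `ℤ`-equivariant `K`-linear bijection
from `P_k[X]` onto the product over all non-negative compositions of order `k` of copies
of the shift representation `K^ℤ`.  Moreover `C₁` is a singleton (so `P₁[X]` is the shift
representation `K^ℤ`), while for `k ≥ 2` the index set `C_k` is countably infinite (so
`P_k[X]` is a countably infinite product of copies of `K^ℤ`). -/
theorem stmt18 (K : Type*) [Field K] [CharZero K] (k : ℕ) (hk : 1 ≤ k) :
    (∃ Φ : (Mk k → K) ≃ₗ[K] ({σ : List ℕ // IsComp k σ} → ℤ → K),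
      ∀ (z : ℤ) (c : Mk k → K),
        Φ (zAct K k z c) = fun σ n => Φ c σ (n - z)) ∧
    (k = 1 → ∃! σ : List ℕ, IsComp 1 σ) ∧
    (2 ≤ k → Countable {σ : List ℕ // IsComp k σ} ∧
      Infinite {σ : List ℕ // IsComp k σ}) :=
  stmt18_general K K k hk
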